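/- For every n ≥ 1 and all β_1, β_2 ∈ ι_n(B_n) ⊆ B_{n+1}, the braid β_1σ_n^{−1}β_2σ_n can be obtained from β_1σ_nβ_2σ_n^{−1} by a finite sequence of moves consisting of conjugations, exactly one positive stabilization, and exactly one positive destabilization; likewise, it can be obtained by a finite sequence consisting of conjugations, exactly one negative stabilization, and exactly one negative destabilization. In particular, any exchange move can be decomposed into conjugations, one stabilization and one destabilization of the same, arbitrarily prescribed, sign; in the positive case this is witnessed by the identity σ_n^{−2}σ_{n+1}^{−1}·(ι_{n+1}(β_2)σ_n^{−2}σ_{n+1}σ_nι_{n+1}(β_1)σ_n)·σ_{n+1}σ_n^2 = σ_n^{−2}ι_{n+1}(β_2)σ_nι_{n+1}(β_1)σ_nσ_{n+1} in B_{n+2}. -/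

import Mathlib

noncomputable section

/-- The braid relations on countably many Artin generators `σ_0, σ_1, σ_2, …`
(the generators of the braid group on `n` strands being `σ_0, …, σ_{n-2}`). -/
def braidRels : Set (FreeGroup ℕ) :=
  {r | (∃ i : ℕ, r = FreeGroup.of i * FreeGroup.of (i + 1) * FreeGroup.of i *
          (FreeGroup.of (i + 1) * FreeGroup.of i * FreeGroup.of (i + 1))⁻¹) ∨
       (∃ i j : ℕ, i + 2 ≤ j ∧
          r = FreeGroup.of i * FreeGroup.of j * (FreeGroup.of j * FreeGroup.of i)⁻¹)}

/-- The stable braid group (union of all braid groups). -/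
abbrev BInf : Type := PresentedGroup braidRels

/-- The Artin generator `σ_i`. -/
def σBI (i : ℕ) : BInf := PresentedGroup.of i

/-- The braid group on `n` strands, realized as the subgroup generated by
`σ_0, …, σ_{n-2}`. -/
def B (n : ℕ) : Subgroup BInf := Subgroup.closure {x | ∃ i, i + 2 ≤ n ∧ x = σBI i}
/-- A braid with a specified number of strands. -/
abbrev BraidP : Type := ℕ × BInf

/-- The braid of the pair indeed lies in the braid group with the specified number of
strands. -/
def PMem (p : BraidP) : Prop := p.2 ∈ B p.1

/-- Conjugation within the braid group on `n` strands. -/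
def ConjM (n : ℕ) (x y : BInf) : Prop :=
  x ∈ B n ∧ y ∈ B n ∧ ∃ g ∈ B n, y = g * x * g⁻¹

/-- A positive (`s = true`) or negative (`s = false`) Markov stabilization:  a braid on
`k + 1` strands is multiplied by `σ_k^{±1}`, giving a braid on `k + 2` strands. -/
def StabM (s : Bool) (p q : BraidP) : Prop :=
  ∃ k : ℕ, p.1 = k + 1 ∧ q.1 = k + 2 ∧
    q.2 = p.2 * (if s then σBI k else (σBI k)⁻¹)

/-- One Markov move: a conjugation, or a stabilization of either sign. -/
def MarkovStep (p q : BraidP) : Prop :=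
  PMem p ∧ PMem q ∧
    ((p.1 = q.1 ∧ ConjM p.1 p.2 q.2) ∨ StabM true p q ∨ StabM false p q)

/-- Markov equivalence: the closures of the braids are equivalent oriented links. -/
def MarkovEquiv : BraidP → BraidP → Prop := Relation.EqvGen MarkovStep

/-- One positive Markov move: a conjugation or a positive stabilization. -/
def PosMarkovStep (p q : BraidP) : Prop :=
  PMem p ∧ PMem q ∧ ((p.1 = q.1 ∧ ConjM p.1 p.2 q.2) ∨ StabM true p q)

/-- Positive Markov equivalence: conjugations and positive stabilizations and
destabilizations only (transversal equivalence of the associated transversal links). -/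
def PosMarkovEquiv : BraidP → BraidP → Prop := Relation.EqvGen PosMarkovStep

/-- An exchange move within the braid group on `n = k + 2` strands:
`b₁ σ b₂ σ⁻¹ ↦ b₁ σ⁻¹ b₂ σ`, where `σ = σ_k` is the last generator and `b₁`, `b₂` are braids
on `k + 1` strands. -/
def ExchM (n : ℕ) (x y : BInf) : Prop :=
  ∃ (k : ℕ) (b₁ b₂ : BInf), n = k + 2 ∧ b₁ ∈ B (k + 1) ∧ b₂ ∈ B (k + 1) ∧
    x = b₁ * σBI k * b₂ * (σBI k)⁻¹ ∧ y = b₁ * (σBI k)⁻¹ * b₂ * σBI k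

/-- The Birman–Menasco equivalence on the braid group on `n` strands: generated by
conjugations and exchange moves.  `BMEquiv n β` is the Birman–Menasco class of `β`. -/
def BMEquiv (n : ℕ) : BInf → BInf → Prop :=
  Relation.EqvGen (fun x y => ConjM n x y ∨ ExchM n x y ∨ ExchM n y x)

/-- A stabilization (`BMMove s p q`) of sign `s` relating the Birman–Menasco class of `p` to
that of `q`: some braid in the class of `p` stabilizes to some braid in the class of `q`. -/
def BMMove (s : Bool) (p q : BraidP) : Prop :=
  ∃ (k : ℕ) (x : BInf), p.1 = k + 1 ∧ q.1 = k + 2 ∧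
    x ∈ B (k + 1) ∧ p.2 ∈ B (k + 1) ∧ q.2 ∈ B (k + 2) ∧
    BMEquiv (k + 1) p.2 x ∧
    BMEquiv (k + 2) q.2 (x * (if s then σBI k else (σBI k)⁻¹))

/-- A stabilization or destabilization of sign `s` of Birman–Menasco classes. -/
def BMStep (s : Bool) (p q : BraidP) : Prop := BMMove s p q ∨ BMMove s q p

/-- A stabilization of sign `s` relating the conjugacy class of `p` to that of `q`: some braid
in the conjugacy class of `p` stabilizes to some braid in the conjugacy class of `q`. -/
def ConjClassMove (s : Bool) (p q : BraidP) : Prop :=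
  ∃ (k : ℕ) (x : BInf), p.1 = k + 1 ∧ q.1 = k + 2 ∧
    x ∈ B (k + 1) ∧ p.2 ∈ B (k + 1) ∧ q.2 ∈ B (k + 2) ∧
    ConjM (k + 1) p.2 x ∧
    ConjM (k + 2) q.2 (x * (if s then σBI k else (σBI k)⁻¹))

/-- A stabilization or destabilization of sign `s` of conjugacy classes. -/
def ConjClassStep (s : Bool) (p q : BraidP) : Prop :=
  ConjClassMove s p q ∨ ConjClassMove s q p
/-- A finite sequence of conjugations. -/
def ConjStar : BraidP → BraidP → Prop :=
  Relation.ReflTransGen (fun p q => p.1 = q.1 ∧ ConjM p.1 p.2 q.2)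

/-- `Z` is obtained from `A` by a finite sequence of moves consisting of conjugations,
exactly one stabilization of sign `s` and exactly one destabilization of sign `s`
(in either order). -/
def OneStabOneDestab (s : Bool) (A Z : BraidP) : Prop :=
  (∃ u v w x, ConjStar A u ∧ StabM s u v ∧ ConjStar v w ∧ StabM s x w ∧ ConjStar x Z) ∨
  (∃ u v w x, ConjStar A u ∧ StabM s v u ∧ ConjStar v w ∧ StabM s w x ∧ ConjStar x Z)

theorem xb_core {G : Type*} [Group G] (a b p q : G) (h : a * b * a = b * a * b)
    (hp : p * b = b * p) (hq : q * b = b * q) :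
    a⁻¹ * a⁻¹ * b⁻¹ * (q * a⁻¹ * a⁻¹ * b * a * p * a) * b * a * a =
      a⁻¹ * a⁻¹ * q * a * p * a * b := by
  have hq' : b⁻¹ * q = q * b⁻¹ := by
    rw [inv_mul_eq_iff_eq_mul, ← mul_assoc, ← hq]; group
  have hp' : b⁻¹ * p = p * b⁻¹ := by
    rw [inv_mul_eq_iff_eq_mul, ← mul_assoc, ← hp]; group
  have h1 : b⁻¹ * a * b = a * b * a⁻¹ := by
    rw [mul_assoc, inv_mul_eq_iff_eq_mul, eq_comm]
    calc b * (a * b * a⁻¹) = (b * a * b) * a⁻¹ := by group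
      _ = a * b := by rw [← h]; group
  have h2 : b⁻¹ * a⁻¹ * a⁻¹ * b * a = a * b⁻¹ * b⁻¹ := by
    calc b⁻¹ * a⁻¹ * a⁻¹ * b * a = (b⁻¹ * a * b)⁻¹ * (b⁻¹ * a * b)⁻¹ * a := by group
      _ = a * b⁻¹ * b⁻¹ := by rw [h1]; group
  have h3 : b⁻¹ * b⁻¹ * a * b * a * a = a * b := by
    calc b⁻¹ * b⁻¹ * a * b * a * a = b⁻¹ * b⁻¹ * (a * b * a) * a := by group
      _ = b⁻¹ * (a * b * a) := by nth_rw 1 [h]; group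
      _ = a * b := by rw [h]; group
  calc a⁻¹ * a⁻¹ * b⁻¹ * (q * a⁻¹ * a⁻¹ * b * a * p * a) * b * a * a
      = a⁻¹ * a⁻¹ * (b⁻¹ * q) * (a⁻¹ * a⁻¹ * b * a * p * a * b * a * a) := by group
    _ = a⁻¹ * a⁻¹ * q * (b⁻¹ * a⁻¹ * a⁻¹ * b * a) * (p * a * b * a * a) := by
        rw [hq']; group
    _ = a⁻¹ * a⁻¹ * q * a * b⁻¹ * (b⁻¹ * p) * (a * b * a * a) := by rw [h2]; group
    _ = a⁻¹ * a⁻¹ * q * a * b⁻¹ * (p * b⁻¹) * (a * b * a * a) := by rw [hp']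
    _ = a⁻¹ * a⁻¹ * q * a * (b⁻¹ * p) * b⁻¹ * (a * b * a * a) := by group
    _ = a⁻¹ * a⁻¹ * q * a * p * (b⁻¹ * b⁻¹ * a * b * a * a) := by rw [hp']; group
    _ = _ := by rw [h3]; group

theorem xb_braid (i : ℕ) : σBI i * σBI (i + 1) * σBI i = σBI (i + 1) * σBI i * σBI (i + 1) := by
  have h : (PresentedGroup.mk braidRels) (FreeGroup.of i * FreeGroup.of (i + 1) * FreeGroup.of i *
          (FreeGroup.of (i + 1) * FreeGroup.of i * FreeGroup.of (i + 1))⁻¹) = 1 :=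
    PresentedGroup.one_of_mem (Or.inl ⟨i, rfl⟩)
  rw [map_mul, map_inv, mul_inv_eq_one] at h
  simp only [map_mul] at h
  exact h

theorem xb_far (i j : ℕ) (hij : i + 2 ≤ j) : σBI i * σBI j = σBI j * σBI i := by
  have h : (PresentedGroup.mk braidRels)
      (FreeGroup.of i * FreeGroup.of j * (FreeGroup.of j * FreeGroup.of i)⁻¹) = 1 :=
    PresentedGroup.one_of_mem (Or.inr ⟨i, j, hij, rfl⟩)
  rw [map_mul, map_inv, mul_inv_eq_one] at h
  simp only [map_mul] at h
  exact h

theorem xb_comm (k : ℕ) (x : BInf) (hx : x ∈ B (k + 1)) :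
    Commute x (σBI (k + 1)) := by
  unfold B at hx
  induction hx using Subgroup.closure_induction with
  | mem x hx =>
    obtain ⟨i, hi, rfl⟩ := hx
    exact xb_far i (k + 1) (by omega)
  | one => exact Commute.one_left _
  | mul x y _ _ h1 h2 => exact h1.mul_left h2
  | inv x _ h => exact h.inv_left

theorem xb_mono {m n : ℕ} (h : m ≤ n) : B m ≤ B n := by
  apply Subgroup.closure_mono
  rintro x ⟨i, hi, rfl⟩
  exact ⟨i, by omega, rfl⟩

theorem xb_gen {i n : ℕ} (h : i + 2 ≤ n) : σBI i ∈ B n :=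
  Subgroup.subset_closure ⟨i, h, rfl⟩

theorem xb_conj {n : ℕ} {x y : BInf} (g : BInf) (hx : x ∈ B n) (hg : g ∈ B n)
    (h : y = g * x * g⁻¹) : ConjStar (n, x) (n, y) := by
  refine Relation.ReflTransGen.single ⟨rfl, hx, ?_, g, hg, h⟩
  rw [h]
  exact mul_mem (mul_mem hg hx) (inv_mem hg)

theorem xb_main (s : Bool) (k : ℕ) (a b p q : BInf)
    (hb : b = if s then σBI (k + 1) else (σBI (k + 1))⁻¹)
    (ha : a ∈ B (k + 2)) (hb' : b ∈ B (k + 3)) (hp : p ∈ B (k + 2)) (hq : q ∈ B (k + 2))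
    (h : a * b * a = b * a * b) (hpb : p * b = b * p) (hqb : q * b = b * q) :
    ∃ u v w x, ConjStar (k + 2, p * a * q * a⁻¹) u ∧ StabM s u v ∧ ConjStar v w ∧
      StabM s x w ∧ ConjStar x (k + 2, p * a⁻¹ * q * a) := by
  have ha3 := xb_mono (show k + 2 ≤ k + 3 by omega) ha
  have hp3 := xb_mono (show k + 2 ≤ k + 3 by omega) hp
  have hq3 := xb_mono (show k + 2 ≤ k + 3 by omega) hq
  have ha' := inv_mem ha
  have ha3' := inv_mem ha3
  have hb3' := inv_mem hb'
  refine ⟨(k + 2, a * p * a * q * a⁻¹ * a⁻¹), (k + 3, a * p * a * q * a⁻¹ * a⁻¹ * b),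
    (k + 3, a⁻¹ * a⁻¹ * q * a * p * a * b), (k + 2, a⁻¹ * a⁻¹ * q * a * p * a),
    xb_conj a ?_ ha (by group), ⟨k + 1, rfl, rfl, by rw [← hb]⟩,
    xb_conj (a⁻¹ * a⁻¹ * b⁻¹ * q * a⁻¹ * a⁻¹ * b) ?_ ?_ ?_,
    ⟨k + 1, rfl, rfl, by rw [← hb]⟩, xb_conj (p * a) ?_ (mul_mem hp ha) (by group)⟩
  · exact mul_mem (mul_mem (mul_mem hp ha) hq) ha'
  · repeat' first | assumption | apply mul_mem
  · repeat' first | assumption | apply mul_mem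
  · rw [← xb_core a b p q h hpb hqb]
    simp only [mul_assoc, mul_inv_rev, inv_inv, inv_mul_cancel_left, mul_inv_cancel_left]
  · repeat' first | assumption | apply mul_mem

/-- **Observation (Birman–Wrinkle).**  For all `β₁, β₂ ∈ ι_n(B_n) ⊆ B_{n+1}` (here
`n = k + 1 ≥ 1`), the braid `β₁ σ_n⁻¹ β₂ σ_n` can be obtained from `β₁ σ_n β₂ σ_n⁻¹` by a
finite sequence of moves consisting of conjugations, exactly one positive stabilization and
exactly one positive destabilization, and likewise with one negative stabilization and one
negative destabilization; i.e. any exchange move can be decomposed into conjugations, one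
stabilization and one destabilization of the same, arbitrarily prescribed, sign.  In the
positive case this is witnessed by the identity
`σ_n⁻² σ_{n+1}⁻¹ ⬝ (β₂ σ_n⁻² σ_{n+1} σ_n β₁ σ_n) ⬝ σ_{n+1} σ_n² = σ_n⁻² β₂ σ_n β₁ σ_n σ_{n+1}`
in `B_{n+2}`  (in our indexing `σ_n = σBI k`, `σ_{n+1} = σBI (k+1)`). -/
theorem exchange_move_decomposition (k : ℕ) (β₁ β₂ : BInf)
    (h₁ : β₁ ∈ B (k + 1)) (h₂ : β₂ ∈ B (k + 1)) :
    OneStabOneDestab true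
        (k + 2, β₁ * σBI k * β₂ * (σBI k)⁻¹) (k + 2, β₁ * (σBI k)⁻¹ * β₂ * σBI k) ∧
    OneStabOneDestab false
        (k + 2, β₁ * σBI k * β₂ * (σBI k)⁻¹) (k + 2, β₁ * (σBI k)⁻¹ * β₂ * σBI k) ∧
    (σBI k)⁻¹ * (σBI k)⁻¹ * (σBI (k + 1))⁻¹ *
        (β₂ * (σBI k)⁻¹ * (σBI k)⁻¹ * σBI (k + 1) * σBI k * β₁ * σBI k) *
        σBI (k + 1) * σBI k * σBI k =
      (σBI k)⁻¹ * (σBI k)⁻¹ * β₂ * σBI k * β₁ * σBI k * σBI (k + 1) := by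
  have hb := xb_braid k
  have c1 := xb_comm k β₁ h₁
  have c2 := xb_comm k β₂ h₂
  have ha : σBI k ∈ B (k + 2) := xb_gen le_rfl
  have hs : σBI (k + 1) ∈ B (k + 3) := xb_gen le_rfl
  have m1 := xb_mono (show k + 1 ≤ k + 2 by omega) h₁
  have m2 := xb_mono (show k + 1 ≤ k + 2 by omega) h₂
  refine ⟨Or.inl ?_, Or.inl ?_, xb_core _ _ _ _ hb c1 c2⟩
  · exact xb_main true k (σBI k) (σBI (k + 1)) β₁ β₂ rfl ha hs m1 m2 hb c1 c2
  · have hb' : (σBI k)⁻¹ * (σBI (k + 1))⁻¹ * (σBI k)⁻¹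
        = (σBI (k + 1))⁻¹ * (σBI k)⁻¹ * (σBI (k + 1))⁻¹ := by
      have := congrArg (fun x => x⁻¹) hb
      simpa only [mul_inv_rev, mul_assoc] using this
    obtain ⟨u, v, w, x, e1, e2, e3, e4, e5⟩ := xb_main false k (σBI k)⁻¹ (σBI (k + 1))⁻¹ β₂ β₁
      rfl (inv_mem ha) (inv_mem hs) m2 m1 hb' c2.inv_right c1.inv_right
    have ha' := inv_mem ha
    refine ⟨u, v, w, x, Relation.ReflTransGen.trans (xb_conj (β₂ * (σBI k)⁻¹) ?_ ?_ ?_) e1,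
      e2, e3, e4, Relation.ReflTransGen.trans e5 (xb_conj (β₁ * (σBI k)⁻¹) ?_ ?_ ?_)⟩
    · exact mul_mem (mul_mem (mul_mem m1 ha) m2) ha'
    · exact mul_mem m2 ha'
    · group
    · rw [inv_inv]
      exact mul_mem (mul_mem (mul_mem m2 ha) m1) ha'
    · exact mul_mem m1 ha'
    · group
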